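/- Let (R, m) be a Noetherian local ring with infinite residue field and let M be an Ulrich R-module of Krull dimension t ≥ 2 (i.e., M is Cohen–Macaulay and the minimal number of generators of M equals the Hilbert multiplicity e⁰_m(M)). Then there exists a parameter ideal Q of M with m M = Q M, and for such Q the irreducible multiplicity satisfies f⁰_Q(M) = ℓ_R(M/QM); that is, if c denotes the eventual leading-coefficient data of the polynomial of degree t−1 equal to ℓ_R((Q^{n+1}M :_M m)/Q^{n+1}M) for n ≫ 0, then (t−1)! times that leading coefficient equals ℓ_R(M/QM). -/

import Mathlib

open IsLocalRing Submodule

/-- The colon submodule `(N :_M J) = {x ∈ M ∣ J x ⊆ N}`. -/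
def Submodule.colonBy {R M : Type*} [CommRing R] [AddCommGroup M] [Module R M]
    (N : Submodule R M) (J : Ideal R) : Submodule R M where
  carrier := {x | ∀ r ∈ J, r • x ∈ N}
  add_mem' := fun {a b} ha hb r hr => by
    rw [smul_add]; exact N.add_mem (ha r hr) (hb r hr)
  zero_mem' := fun r hr => by rw [smul_zero]; exact N.zero_mem
  smul_mem' := fun c {x} hx r hr => by
    rw [smul_comm]; exact N.smul_mem c (hx r hr)

/-- The length of a module: the height of `⊤` in its lattice of submodules. -/
noncomputable def moduleLength (R M : Type*) [Ring R] [AddCommGroup M] [Module R M] : ℕ∞ :=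
  Order.height (⊤ : Submodule R M)

/-- The minimal number of generators of a module. -/
noncomputable def muGen (R M : Type*) [Ring R] [AddCommGroup M] [Module R M] : ℕ :=
  sInf {n | ∃ s : Finset M, s.card = n ∧ Submodule.span R (s : Set M) = ⊤}

/-- The depth of a module over a local ring: the supremum of lengths of `M`-regular
sequences consisting of elements of the maximal ideal. -/
noncomputable def depthM (R M : Type*) [CommRing R] [IsLocalRing R]
    [AddCommGroup M] [Module R M] : ℕ :=
  sSup {n | ∃ rs : List R, rs.length = n ∧ (∀ r ∈ rs, r ∈ maximalIdeal R) ∧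
    RingTheory.Sequence.IsRegular M rs}

/-- `Q` is a parameter ideal of `M` (of dimension `t`): it is generated by `t` elements of
the maximal ideal and `M/QM` has finite length. -/
def IsParameterIdeal (R M : Type*) [CommRing R] [IsLocalRing R]
    [AddCommGroup M] [Module R M] (t : ℕ) (Q : Ideal R) : Prop :=
  Q ≤ maximalIdeal R ∧ ∃ s : Finset R, s.card = t ∧ Q = Ideal.span (s : Set R) ∧
    moduleLength R (M ⧸ (Q • ⊤ : Submodule R M)) ≠ ⊤

/-!
Over an infinite residue field, an element `x` of `𝔪` can be chosen that is both superficial and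
`M`-regular. Passing to `M / xM` replaces the Hilbert–Samuel polynomial by its backward difference
and lowers the depth by one. After `t` such cuts the polynomial is the constant `e⁰_𝔪(M) = μ(M)`,
which is also the length of `M / 𝔪M`. Hence the cut module `M / QM` has `𝔪ⁿ⁺¹(M / QM) = 𝔪(M / QM)`
for `n ≫ 0`, so Nakayama's lemma gives `𝔪(M / QM) = 0`, that is, `𝔪M = QM`.

Superficiality of `x` also gives `(𝔪ⁿ⁺¹M :_M 𝔪) = 𝔪ⁿM` for `n ≫ 0`, so the socle lengths of
`M / Qⁿ⁺¹M = M / 𝔪ⁿ⁺¹M` are the first differences of the Hilbert–Samuel function.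
-/

open Filter Polynomial RingTheory.Sequence

section BackwardDifference

variable {A : Type*} [CommRing A]

/-- The backward difference `P(X) - P(X - 1)` of a polynomial. -/
noncomputable def backwardDiff (P : A[X]) : A[X] :=
  P - taylor (-1) P

theorem eval_backwardDiff (P : A[X]) (a : A) :
    (backwardDiff P).eval a = P.eval a - P.eval (a - 1) := by
  rw [backwardDiff, eval_sub, taylor_eval, sub_eq_add_neg a]

theorem natDegree_backwardDiff_le {P : A[X]} {k : ℕ} (hP : P.natDegree ≤ k + 1) :
    (backwardDiff P).natDegree ≤ k := by
  refine natDegree_le_iff_coeff_eq_zero.mpr fun n hn => ?_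
  rw [backwardDiff, coeff_sub, sub_eq_zero]
  rcases (hP.trans hn).eq_or_lt with h | h
  · rw [← h, coeff_taylor_natDegree, leadingCoeff]
  · rw [coeff_eq_zero_of_natDegree_lt h,
      coeff_eq_zero_of_natDegree_lt ((natDegree_taylor P _).trans_lt h)]

theorem coeff_backwardDiff {P : A[X]} {k : ℕ} (hP : P.natDegree ≤ k + 1) :
    (backwardDiff P).coeff k = (k + 1) * P.coeff (k + 1) := by
  have hlinear : (hasseDeriv k P).natDegree ≤ 1 :=
    (natDegree_hasseDeriv_le P k).trans (by lia)
  have hzero : (hasseDeriv k P).coeff 0 = P.coeff k := by simp [hasseDeriv_coeff]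
  have hone : (hasseDeriv k P).coeff 1 = (k + 1) * P.coeff (k + 1) := by
    simp [hasseDeriv_coeff, add_comm 1 k]
  rw [backwardDiff, coeff_sub, taylor_coeff, eq_X_add_C_of_natDegree_le_one hlinear]
  simp [hzero, hone]

theorem factorial_mul_coeff_backwardDiff {P : A[X]} {k : ℕ} (hP : P.natDegree ≤ k + 1) :
    (k.factorial : A) * (backwardDiff P).coeff k = ((k + 1).factorial : A) * P.coeff (k + 1) := by
  rw [coeff_backwardDiff hP, Nat.factorial_succ]
  push_cast
  ring

theorem natDegree_backwardDiff [CharZero A] [NoZeroDivisors A] {P : A[X]} {k : ℕ}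
    (hP : P.natDegree = k + 1) : (backwardDiff P).natDegree = k := by
  refine natDegree_eq_of_le_of_coeff_ne_zero (natDegree_backwardDiff_le hP.le) ?_
  have hcoeff : P.coeff (k + 1) ≠ 0 := by
    rw [← hP, coeff_natDegree, leadingCoeff_ne_zero]
    rintro rfl
    simp at hP
  rw [coeff_backwardDiff hP.le]
  exact mul_ne_zero (by exact_mod_cast k.succ_ne_zero) hcoeff

end BackwardDifference

section EventuallyPolynomial

/-- The values of `f : ℕ → ℕ∞` at large integers are finite and given by the polynomial `P`. -/
def EventuallyPolynomial (f : ℕ → ℕ∞) (P : ℚ[X]) : Prop :=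
  ∀ᶠ n in atTop, ∃ len : ℕ, f n = len ∧ (len : ℚ) = P.eval (n : ℚ)

namespace EventuallyPolynomial

variable {f g : ℕ → ℕ∞} {P P' : ℚ[X]}

theorem unique (h : EventuallyPolynomial f P) (h' : EventuallyPolynomial f P') : P = P' := by
  have heval : ∀ᶠ n : ℕ in atTop, P.eval (n : ℚ) = P'.eval (n : ℚ) := by
    filter_upwards [h, h'] with n ⟨a, ha, hPa⟩ ⟨b, hb, hPb⟩
    have hab : a = b := Nat.cast_injective (ha.symm.trans hb)
    rw [← hPa, ← hPb, hab]
  refine eq_of_infinite_eval_eq P P' (Set.Infinite.mono ?_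
    ((Nat.frequently_atTop_iff_infinite.mp heval.frequently).image Nat.cast_injective.injOn))
  rintro _ ⟨n, hn, rfl⟩
  exact hn

theorem backwardDiff_of_succ_eq_add (hf : EventuallyPolynomial f P)
    (hg : ∀ᶠ n in atTop, f (n + 1) = f n + g (n + 1)) :
    EventuallyPolynomial g (backwardDiff P) := by
  rw [EventuallyPolynomial, ← map_add_atTop_eq_nat 1, eventually_map]
  filter_upwards [hf, (tendsto_add_atTop_nat 1).eventually hf, hg]
    with n ⟨a, ha, hPa⟩ ⟨b, hb, hPb⟩ hstep
  rw [ha, hb] at hstep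
  obtain ⟨c, hc⟩ := ENat.ne_top_iff_exists.mp
    (ne_top_of_le_ne_top (ENat.natCast_ne_top b) (hstep ▸ le_add_self))
  rw [← hc] at hstep
  norm_cast at hstep
  refine ⟨c, hc.symm, ?_⟩
  rw [eval_backwardDiff, ← hPb, hstep]
  push_cast
  rw [add_sub_cancel_right, ← hPa, add_sub_cancel_left]

end EventuallyPolynomial

end EventuallyPolynomial

section Length

open scoped Pointwise

variable {R M : Type*} [CommRing R] [AddCommGroup M] [Module R M]

theorem moduleLength_eq_length (R M : Type*) [Ring R] [AddCommGroup M] [Module R M] :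
    moduleLength R M = Module.length R M :=
  (Module.length_eq_height R M).symm

theorem smul_top_quotient (I : Ideal R) (N : Submodule R M) :
    (I • ⊤ : Submodule R (M ⧸ N)) = (I • ⊤ : Submodule R M).map N.mkQ := by
  rw [Submodule.map_smul'', Submodule.map_top, Submodule.range_mkQ]

theorem length_quotient_eq_add {A B : Submodule R M} (h : A ≤ B) :
    Module.length R (M ⧸ A) = Module.length R (B.map A.mkQ) + Module.length R (M ⧸ B) := by
  rw [Module.length_eq_add_of_exact (B.map A.mkQ).subtype (B.map A.mkQ).mkQ
      (Submodule.subtype_injective _) (Submodule.mkQ_surjective _)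
      (LinearMap.exact_subtype_mkQ _),
    (Submodule.quotientQuotientEquivQuotient A B h).length_eq]

theorem eq_of_le_of_length_quotient_eq {A B : Submodule R M} (h : A ≤ B)
    (hfin : Module.length R (M ⧸ A) ≠ ⊤)
    (hlen : Module.length R (M ⧸ A) = Module.length R (M ⧸ B)) : A = B := by
  have hzero : Module.length R (B.map A.mkQ) = 0 := by
    have hadd := length_quotient_eq_add h
    rw [← hlen] at hadd
    exact (ENat.add_left_injective_of_ne_top hfin (by simpa using hadd)).symm
  rw [Module.length_eq_zero_iff, Submodule.subsingleton_iff_eq_bot, ← LinearMap.le_ker_iff_map,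
    Submodule.ker_mkQ] at hzero
  exact le_antisymm h hzero

theorem length_quotient_eq_add_of_comap_lsmul {A B : Submodule R M} {x : R}
    (h : B.comap (LinearMap.lsmul R M x) = A) :
    Module.length R (M ⧸ B) = Module.length R (M ⧸ A) +
      Module.length R (QuotSMulTop x M ⧸ B.map (x • ⊤ : Submodule R M).mkQ) := by
  have hle : A ≤ B.comap (LinearMap.lsmul R M x) := h.ge
  have hinj : Function.Injective (A.mapQ B (LinearMap.lsmul R M x) hle) := by
    rw [← LinearMap.ker_eq_bot, Submodule.ker_mapQ, h, Submodule.mkQ_map_self]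
  have hrange : LinearMap.range (A.mapQ B (LinearMap.lsmul R M x) hle) =
      (x • ⊤ : Submodule R M).map B.mkQ := by
    rw [Submodule.range_mapQ, LinearMap.range_eq_map]
    rfl
  rw [Module.length_eq_add_of_exact (A.mapQ B (LinearMap.lsmul R M x) hle) (Submodule.mkQ _)
      hinj (Submodule.mkQ_surjective _) (LinearMap.exact_map_mkQ_range _), hrange,
    (Submodule.quotientQuotientEquivQuotientSup B (x • ⊤)).length_eq,
    (Submodule.quotientQuotientEquivQuotientSup (x • ⊤) B).length_eq, sup_comm]

theorem pointwise_smul_top_le_smul_top {I : Ideal R} {x : R} (hx : x ∈ I) :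
    (x • ⊤ : Submodule R M) ≤ I • ⊤ := by
  rw [← Submodule.ideal_span_singleton_smul]
  exact Submodule.smul_mono_left ((Ideal.span_singleton_le_iff_mem I).mpr hx)

theorem length_quotSMulTop_quotient_smul_top {I : Ideal R} {x : R} (hx : x ∈ I) :
    Module.length R (QuotSMulTop x M ⧸ (I • ⊤ : Submodule R (QuotSMulTop x M))) =
      Module.length R (M ⧸ (I • ⊤ : Submodule R M)) := by
  rw [smul_top_quotient]
  exact (Submodule.quotientQuotientEquivQuotient _ _
    (pointwise_smul_top_le_smul_top hx)).length_eq

theorem muGen_eq_spanFinrank [Module.Finite R M] :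
    muGen R M = (⊤ : Submodule R M).spanFinrank := by
  obtain ⟨s, hs, hspan⟩ :=
    (Module.Finite.fg_top (R := R) (M := M)).exists_span_finset_card_eq_spanFinrank
  refine le_antisymm (Nat.sInf_le ⟨s, hs, hspan⟩) (le_csInf ⟨_, s, hs, hspan⟩ ?_)
  rintro _ ⟨s', rfl, hspan'⟩
  rw [← hspan', ← Set.ncard_coe_finset]
  exact Submodule.spanFinrank_span_le_ncard_of_finite s'.finite_toSet

theorem length_quotient_maximalIdeal_smul_top [IsLocalRing R] [Module.Finite R M] :
    Module.length R (M ⧸ (maximalIdeal R • ⊤ : Submodule R M)) = muGen R M := by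
  let _ : Field (R ⧸ maximalIdeal R) := Ideal.Quotient.field _
  let e : ((⊤ : Submodule R M) ⧸ maximalIdeal R • (⊤ : Submodule R (⊤ : Submodule R M))) ≃ₗ[R]
      M ⧸ (maximalIdeal R • ⊤ : Submodule R M) :=
    Submodule.Quotient.equiv _ _ Submodule.topEquiv (by
      rw [Submodule.map_smul'', Submodule.map_top, LinearEquiv.range])
  rw [muGen_eq_spanFinrank, spanFinrank_eq_finrank_quotient _ Module.Finite.fg_top, ← e.length_eq,
    Module.length_eq_of_surjective (R := R ⧸ maximalIdeal R) (S := R) Ideal.Quotient.mk_surjective]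
  have : Module.Finite (R ⧸ maximalIdeal R)
      ((⊤ : Submodule R M) ⧸ maximalIdeal R • (⊤ : Submodule R (⊤ : Submodule R M))) :=
    Module.Finite.of_restrictScalars_finite R _ _
  exact Module.length_eq_finrank _ _

end Length

section Avoidance

theorem infinite_of_infinite_residueField (R E : Type*) [CommRing R] [IsLocalRing R]
    [Infinite (ResidueField R)] [AddCommGroup E] [Module R E] [Nontrivial E] : Infinite E := by
  obtain ⟨v, hv⟩ := exists_ne (0 : E)
  choose lift hlift using residue_surjective (R := R)
  refine Infinite.of_injective (fun a => lift a • v) fun a b hab => ?_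
  by_contra hne
  have hunit : IsUnit (lift a - lift b) := by
    rw [← residue_ne_zero_iff_isUnit, map_sub, hlift, hlift]
    exact sub_ne_zero.mpr hne
  refine hv (hunit.smul_eq_zero.mp ?_)
  rw [sub_smul, sub_eq_zero]
  exact hab

theorem exists_forall_notMem_of_forall_ne_top {R E ι : Type*} [CommRing R] [IsLocalRing R]
    [Infinite (ResidueField R)] [AddCommGroup E] [Module R E] {F : Set ι} (hF : F.Finite)
    {W : ι → Submodule R E} (hW : ∀ i ∈ F, W i ≠ ⊤) : ∃ x : E, ∀ i ∈ F, x ∉ W i := by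
  classical
  by_contra! hcover
  have hunion : ⋃ p ∈ hF.toFinset.image W, (p : Set E) = Set.univ := by
    refine Set.eq_univ_of_forall fun x => ?_
    obtain ⟨i, hi, hx⟩ := hcover x
    exact Set.mem_biUnion (Finset.mem_image_of_mem W (hF.mem_toFinset.mpr hi)) hx
  obtain ⟨p, hp, hindex⟩ := Submodule.exists_finiteIndex_of_cover hunion
  obtain ⟨i, hi, rfl⟩ := Finset.mem_image.mp hp
  have : Finite (E ⧸ W i) := AddSubgroup.finite_quotient_of_finiteIndex
  have : Nontrivial (E ⧸ W i) :=
    Submodule.Quotient.nontrivial_iff.mpr (hW i (hF.mem_toFinset.mp hi))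
  have : Infinite (E ⧸ W i) := infinite_of_infinite_residueField R _
  exact not_finite (E ⧸ W i)

end Avoidance

section FilterRegular

variable {S G : Type*} [CommRing S] [IsNoetherianRing S] [AddCommGroup G] [Module S G]

theorem exists_pow_le_annihilator [Module.Finite S G] {J : Ideal S}
    (hJ : ∀ p ∈ associatedPrimes S G, J ≤ p) : ∃ k, J ^ k ≤ Module.annihilator S G := by
  refine Ideal.exists_pow_le_of_le_radical_of_fg ?_ (IsNoetherian.noetherian J)
  rw [← Ideal.sInf_minimalPrimes]
  exact le_sInf fun p hp =>
    hJ p (Module.associatedPrimes.minimalPrimes_annihilator_subset_associatedPrimes S G hp)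

theorem exists_forall_mem_pow_smul_top_eq_zero_of_smul_eq_zero [Module.Finite S G]
    {J : Ideal S} {s : S} (hs : ∀ p ∈ associatedPrimes S G, s ∈ p → J ≤ p) :
    ∃ c, ∀ u ∈ (J ^ c • ⊤ : Submodule S G), s • u = 0 → u = 0 := by
  let K := LinearMap.ker (LinearMap.lsmul S G s)
  have hassoc : ∀ p ∈ associatedPrimes S K, J ≤ p := fun p hp =>
    hs p (associatedPrimes.subset_of_injective K.injective_subtype hp) <|
      hp.annihilator_le <| Submodule.mem_annihilator.mpr fun v _ => Subtype.ext v.2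
  obtain ⟨k, hk⟩ := exists_pow_le_annihilator hassoc
  obtain ⟨k', hArtinRees⟩ := Ideal.exists_pow_inf_eq_pow_smul J K
  refine ⟨k' + k, fun u hu hsu => ?_⟩
  have hmem : u ∈ J ^ (k' + k) • ⊤ ⊓ K := ⟨hu, hsu⟩
  rw [hArtinRees _ le_self_add, Nat.add_sub_cancel_left] at hmem
  have hkill : J ^ k • K = ⊥ := Submodule.le_annihilator_iff.mp hk
  have huK : u ∈ J ^ k • K := Submodule.smul_mono le_rfl inf_le_right hmem
  exact (Submodule.mem_bot S).mp (hkill ▸ huK)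

theorem exists_finite_primes_forall_mem_of_smul_mem {A : Submodule S G} (hA : A.FG)
    (B : Submodule S G) (J : Ideal S) :
    ∃ F : Set (Ideal S), F.Finite ∧ (∀ p ∈ F, ¬ J ≤ p) ∧ ∀ s, (∀ p ∈ F, s ∉ p) →
      ∃ c, ∀ u ∈ J ^ c • A, s • u ∈ B → u ∈ B := by
  have : Module.Finite S A := Module.Finite.iff_fg.mpr hA
  refine ⟨{p ∈ associatedPrimes S (A ⧸ B.comap A.subtype) | ¬ J ≤ p},
    (associatedPrimes.finite _ _).subset (Set.sep_subset _ _), fun p hp => hp.2, fun s hs => ?_⟩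
  obtain ⟨c, hc⟩ := exists_forall_mem_pow_smul_top_eq_zero_of_smul_eq_zero
    (G := A ⧸ B.comap A.subtype) fun p hp hsp => not_not.mp fun hJ => hs p ⟨hp, hJ⟩ hsp
  refine ⟨c, fun u hu hsu => ?_⟩
  have hmap : (J ^ c • ⊤ : Submodule S A).map A.subtype = J ^ c • A := by
    rw [Submodule.map_smul'', Submodule.map_top, Submodule.range_subtype]
  rw [← hmap] at hu
  obtain ⟨v, hv, rfl⟩ := hu
  have hzero := hc (Submodule.Quotient.mk v)
    (smul_top_quotient (J ^ c) (B.comap A.subtype) ▸ Submodule.mem_map_of_mem hv)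
    ((Submodule.Quotient.mk_eq_zero _).mpr hsu)
  exact (Submodule.Quotient.mk_eq_zero (B.comap A.subtype)).mp hzero

end FilterRegular

section Superficial

variable {R : Type*} [CommRing R] (I : Ideal R) (M : Type*) [AddCommGroup M] [Module R M]

/-- An element `x ∈ I` is superficial for `I` on `M` if multiplication by `x` shifts the `I`-adic
filtration by exactly one degree, for large degrees and far enough inside `M`. -/
structure IsSuperficial (x : R) : Prop where
  mem : x ∈ I
  exists_mem_pow_smul_top : ∃ c : ℕ, ∀ n ≥ c, ∀ u ∈ (I ^ c • ⊤ : Submodule R M),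
    x • u ∈ (I ^ (n + 1) • ⊤ : Submodule R M) → u ∈ (I ^ n • ⊤ : Submodule R M)

/-- The map `a ↦ aT` onto the degree one part of the Rees algebra `⨁ Iⁿ Tⁿ`. -/
noncomputable def reesDegreeOne : I →ₗ[R] reesAlgebra I where
  toFun a := ⟨monomial 1 (a : R), reesAlgebra.monomial_mem.mpr ((pow_one I).symm ▸ a.2)⟩
  map_add' a b := by ext1; simp
  map_smul' r a := by ext1; simp [smul_monomial]

/-- The ideal `⨁_{n > 0} Iⁿ Tⁿ` of the Rees algebra, presented by its generators of degree one. -/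
noncomputable def reesIrrelevantIdeal : Ideal (reesAlgebra I) :=
  Ideal.span (Set.range (reesDegreeOne I))

variable {I M}

theorem pow_smul_top_anti {a b : ℕ} (h : a ≤ b) :
    (I ^ b • ⊤ : Submodule R M) ≤ I ^ a • ⊤ :=
  Submodule.smul_mono_left (Ideal.pow_le_pow_right h)

theorem pow_smul_top_eq_of_smul_top_eq {I J : Ideal R}
    (h : (I • ⊤ : Submodule R M) = J • ⊤) (n : ℕ) :
    (I ^ n • ⊤ : Submodule R M) = J ^ n • ⊤ := by
  induction n with
  | zero => rw [pow_zero, pow_zero]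
  | succ n ih =>
    rw [pow_succ, ← smul_smul, h, smul_smul, mul_comm, ← smul_smul, ih, smul_smul, ← pow_succ']

theorem reesDegreeOne_smul_single (a : I) (n : ℕ) (u : M) :
    reesDegreeOne I a • PolynomialModule.single R n u =
      PolynomialModule.single R (n + 1) ((a : R) • u) := by
  rw [Subalgebra.smul_def, add_comm]
  exact PolynomialModule.monomial_smul_single 1 (a : R) n u

theorem single_mem_filtration_submodule_iff {F : I.Filtration M} {n : ℕ} {u : M} :
    PolynomialModule.single R n u ∈ F.submodule ↔ u ∈ F.N n := by
  refine ⟨fun h => ?_, fun h i => ?_⟩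
  · simpa using h n
  · rw [PolynomialModule.coeff_single, Finsupp.single_apply]
    split_ifs with hi
    · exact hi ▸ h
    · exact zero_mem _

theorem single_mem_reesIrrelevantIdeal_pow_smul {n : ℕ} {u : M}
    (hu : u ∈ (I ^ n • ⊤ : Submodule R M)) :
    PolynomialModule.single R n u ∈
      reesIrrelevantIdeal I ^ n • (I.stableFiltration (⊤ : Submodule R M)).submodule := by
  induction n generalizing u with
  | zero =>
    rw [pow_zero, one_smul]
    exact single_mem_filtration_submodule_iff.mpr hu
  | succ n ih =>
    rw [pow_succ', ← smul_smul] at hu ⊢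
    induction hu using Submodule.smul_induction_on' with
    | smul a ha v hv =>
      rw [← reesDegreeOne_smul_single ⟨a, ha⟩ n v]
      exact Submodule.smul_mem_smul (Ideal.subset_span ⟨_, rfl⟩) (ih hv)
    | add v _ w _ hv hw =>
      rw [PolynomialModule.single_add]
      exact add_mem hv hw

theorem IsSuperficial.of_mem_pow_smul_top {x : R} (hx : x ∈ I) {c : ℕ}
    (hc : ∀ n ≥ c, ∀ u ∈ (I ^ n • ⊤ : Submodule R M),
      x • u ∈ (I ^ (n + 2) • ⊤ : Submodule R M) → u ∈ (I ^ (n + 1) • ⊤ : Submodule R M)) :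
    IsSuperficial I M x := by
  refine ⟨hx, c, fun n hn u hu => ?_⟩
  induction n, hn using Nat.le_induction with
  | base => exact fun _ => hu
  | succ n hn ih => exact fun hxu => hc n hn u (ih (pow_smul_top_anti (Nat.le_succ _) hxu)) hxu

theorem exists_isSuperficial [IsNoetherianRing R] [IsLocalRing R] [Infinite (ResidueField R)]
    (I : Ideal R) (M : Type*) [AddCommGroup M] [Module R M] [Module.Finite R M] :
    ∃ x, IsSuperficial I M x := by
  let F := I.stableFiltration (⊤ : Submodule R M)
  let F' := I.stableFiltration (I • ⊤ : Submodule R M)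
  have hF' (n : ℕ) : F'.N n = I ^ (n + 1) • ⊤ := by
    rw [pow_succ, ← smul_smul]
    rfl
  have hfg : F.submodule.FG :=
    (Ideal.Filtration.submodule_fg_iff_stable F fun _ => IsNoetherian.noetherian _).mpr
      (Ideal.stableFiltration_stable _ _)
  -- `primes` consists of associated primes of the associated graded module `⨁ IⁿM / Iⁿ⁺¹M`.
  obtain ⟨primes, hfinite, hprimes, hfilter⟩ :=
    exists_finite_primes_forall_mem_of_smul_mem hfg F'.submodule (reesIrrelevantIdeal I)
  obtain ⟨x, hx⟩ := exists_forall_notMem_of_forall_ne_top hfinite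
    (W := fun p => (p.restrictScalars R).comap (reesDegreeOne I))
    fun p hp htop => hprimes p hp <| Ideal.span_le.mpr <| Set.range_subset_iff.mpr fun a =>
      htop.ge (Submodule.mem_top (x := a))
  obtain ⟨c, hc⟩ := hfilter (reesDegreeOne I x) hx
  refine ⟨x, .of_mem_pow_smul_top x.2 (c := c) fun n hn u hu hxu => ?_⟩
  rw [← hF', ← single_mem_filtration_submodule_iff] at hxu ⊢
  rw [← reesDegreeOne_smul_single] at hxu
  exact hc _ (Submodule.smul_mono_left (Ideal.pow_le_pow_right hn)
    (single_mem_reesIrrelevantIdeal_pow_smul hu)) hxu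

namespace IsSuperficial

variable {x : R} [IsNoetherianRing R] [Module.Finite R M]

theorem isSMulRegular [IsLocalRing R] (hx : IsSuperficial I M x) (hI : I ≠ ⊤) {y : R}
    (hy : y ∈ I) (hreg : IsSMulRegular M y) : IsSMulRegular M x := by
  obtain ⟨c, hc⟩ := hx.exists_mem_pow_smul_top
  refine IsSMulRegular.of_right_eq_zero_of_smul fun u hxu => ?_
  have hsep : y ^ c • u ∈ (⨅ n : ℕ, I ^ n • ⊤ : Submodule R M) := by
    refine Submodule.mem_iInf _ |>.mpr fun n => ?_
    refine pow_smul_top_anti (le_max_left n c) <| hc _ (le_max_right n c) _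
      (Submodule.smul_mem_smul (Ideal.pow_mem_pow hy c) Submodule.mem_top) ?_
    rw [smul_comm, hxu, smul_zero]
    exact zero_mem _
  rw [Ideal.iInf_pow_smul_eq_bot_of_isLocalRing I hI, Submodule.mem_bot] at hsep
  exact (hreg.pow c).right_eq_zero_of_smul hsep

theorem eventually_comap_lsmul_eq (hx : IsSuperficial I M x) (hreg : IsSMulRegular M x) :
    ∀ᶠ n in atTop,
      (I ^ (n + 1) • ⊤ : Submodule R M).comap (LinearMap.lsmul R M x) = I ^ n • ⊤ := by
  obtain ⟨c, hc⟩ := hx.exists_mem_pow_smul_top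
  obtain ⟨k, hArtinRees⟩ :=
    Ideal.exists_pow_inf_eq_pow_smul I (LinearMap.range (LinearMap.lsmul R M x))
  filter_upwards [eventually_ge_atTop (k + c)] with n hn
  refine le_antisymm (fun u hu => ?_) fun u hu => ?_
  · have hmem : x • u ∈ (I ^ (n + 1 - k) • ⊤ : Submodule R M).map (LinearMap.lsmul R M x) := by
      rw [Submodule.map_smul'', Submodule.map_top]
      have hinf : x • u ∈ I ^ (n + 1) • ⊤ ⊓ LinearMap.range (LinearMap.lsmul R M x) :=
        ⟨hu, u, rfl⟩
      rw [hArtinRees _ (by lia)] at hinf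
      exact Submodule.smul_mono le_rfl inf_le_right hinf
    obtain ⟨v, hv, hvu⟩ := hmem
    obtain rfl : v = u := hreg hvu
    exact hc n (by lia) v (pow_smul_top_anti (by lia) hv) hu
  · rw [Submodule.mem_comap, pow_succ', ← smul_smul]
    exact Submodule.smul_mem_smul hx.mem hu

theorem eventually_colonBy_eq (hx : IsSuperficial I M x) (hreg : IsSMulRegular M x) :
    ∀ᶠ n in atTop, (I ^ (n + 1) • ⊤ : Submodule R M).colonBy I = I ^ n • ⊤ := by
  filter_upwards [hx.eventually_comap_lsmul_eq hreg] with n hn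
  refine le_antisymm (fun u hu => hn ▸ hu x hx.mem) fun u hu r hr => ?_
  rw [pow_succ', ← smul_smul]
  exact Submodule.smul_mem_smul hr hu

end IsSuperficial

end Superficial

section HilbertSamuel

variable {R : Type*} [CommRing R] (I : Ideal R) (M : Type*) [AddCommGroup M] [Module R M]

/-- The Hilbert–Samuel function `n ↦ ℓ(M / Iⁿ⁺¹M)`. -/
noncomputable def hilbertSamuelFunction (n : ℕ) : ℕ∞ :=
  moduleLength R (M ⧸ (I ^ (n + 1) • ⊤ : Submodule R M))

/-- The function `n ↦ ℓ((Qⁿ⁺¹M :_M I) / Qⁿ⁺¹M)`, whose normalised leading coefficient is the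
irreducible multiplicity `f⁰_Q(M)` when `I` is the maximal ideal of a local ring. -/
noncomputable def colonLengthFunction (Q I : Ideal R) (M : Type*) [AddCommGroup M] [Module R M]
    (n : ℕ) : ℕ∞ :=
  moduleLength R (Submodule.map (Q ^ (n + 1) • ⊤ : Submodule R M).mkQ
    ((Q ^ (n + 1) • ⊤ : Submodule R M).colonBy I))

variable {I M}

theorem colonLengthFunction_congr {Q Q' : Ideal R}
    (h : (Q • ⊤ : Submodule R M) = Q' • ⊤) :
    colonLengthFunction Q I M = colonLengthFunction Q' I M := by
  funext n
  rw [colonLengthFunction, pow_smul_top_eq_of_smul_top_eq h, colonLengthFunction]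

theorem IsSuperficial.hilbertSamuelFunction_succ [IsNoetherianRing R] [Module.Finite R M] {x : R}
    (hx : IsSuperficial I M x) (hreg : IsSMulRegular M x) :
    ∀ᶠ n in atTop, hilbertSamuelFunction I M (n + 1) =
      hilbertSamuelFunction I M n + hilbertSamuelFunction I (QuotSMulTop x M) (n + 1) := by
  filter_upwards [(tendsto_add_atTop_nat 1).eventually (hx.eventually_comap_lsmul_eq hreg)]
    with n hn
  simp only [hilbertSamuelFunction, moduleLength_eq_length]
  rw [length_quotient_eq_add_of_comap_lsmul hn, smul_top_quotient]

theorem IsSuperficial.hilbertSamuelFunction_succ_eq_add_colonLengthFunction [IsNoetherianRing R]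
    [Module.Finite R M] {x : R} (hx : IsSuperficial I M x) (hreg : IsSMulRegular M x) :
    ∀ᶠ n in atTop, hilbertSamuelFunction I M (n + 1) =
      hilbertSamuelFunction I M n + colonLengthFunction I I M (n + 1) := by
  filter_upwards [(tendsto_add_atTop_nat 1).eventually (hx.eventually_colonBy_eq hreg)] with n hn
  simp only [hilbertSamuelFunction, colonLengthFunction, moduleLength_eq_length]
  rw [hn, length_quotient_eq_add (pow_smul_top_anti (n + 1).le_succ), add_comm]

end HilbertSamuel

section Depth

open scoped Pointwise

variable {R : Type*} [CommRing R] {M : Type*} [AddCommGroup M] [Module R M]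

theorem smul_mem_smul_top_of_smul_eq_smul {x y r : R} {u v : M} (hx : IsSMulRegular M x)
    (huv : y • u = x • v) (hu : r • u ∈ (x • ⊤ : Submodule R M)) :
    r • v ∈ (y • ⊤ : Submodule R M) := by
  obtain ⟨w, -, hw : x • w = r • u⟩ := hu
  refine ⟨w, Submodule.mem_top, hx ?_⟩
  change x • y • w = x • r • v
  rw [smul_comm x y, hw, smul_comm y r, huv, smul_comm r x]

theorem isAssociatedPrime_quotSMulTop_exchange [IsNoetherianRing R] {x y : R}
    (hx : IsSMulRegular M x) (hy : IsSMulRegular M y) {p : Ideal R} (hyp : y ∈ p)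
    (hp : IsAssociatedPrime p (QuotSMulTop x M)) : IsAssociatedPrime p (QuotSMulTop y M) := by
  obtain ⟨hprime, u, hu⟩ := isAssociatedPrime_iff.mp hp
  obtain ⟨u, rfl⟩ := Submodule.Quotient.mk_surjective _ u
  have hmem (r : R) : r ∈ p ↔ r • u ∈ (x • ⊤ : Submodule R M) := by
    rw [hu, Submodule.mem_colon_singleton, Submodule.mem_bot, ← Submodule.Quotient.mk_smul,
      Submodule.Quotient.mk_eq_zero]
  obtain ⟨v, -, hv : x • v = y • u⟩ := (hmem y).mp hyp
  refine isAssociatedPrime_iff.mpr ⟨hprime, Submodule.Quotient.mk v, Ideal.ext fun r => ?_⟩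
  rw [hmem, Submodule.mem_colon_singleton, Submodule.mem_bot, ← Submodule.Quotient.mk_smul,
    Submodule.Quotient.mk_eq_zero]
  exact ⟨smul_mem_smul_top_of_smul_eq_smul hx hv.symm, smul_mem_smul_top_of_smul_eq_smul hy hv⟩

theorem notMem_associatedPrimes_of_isSMulRegular [IsNoetherianRing R] {y : R} {p : Ideal R}
    (hyp : y ∈ p) (hreg : IsSMulRegular M y) : p ∉ associatedPrimes R M := fun hp => by
  have hmem : y ∈ ⋃ p ∈ associatedPrimes R M, (p : Set R) := Set.mem_biUnion hp hyp
  rw [biUnion_associatedPrimes_eq_compl_regular] at hmem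
  exact hmem hreg

variable [IsLocalRing R]

theorem exists_mem_maximalIdeal_isSMulRegular [IsNoetherianRing R] [Module.Finite R M]
    (hM : maximalIdeal R ∉ associatedPrimes R M) :
    ∃ z ∈ maximalIdeal R, IsSMulRegular M z := by
  by_contra! hzero
  have hcover : (maximalIdeal R : Set R) ⊆ ⋃ p ∈ associatedPrimes R M, (p : Set R) := by
    rw [biUnion_associatedPrimes_eq_compl_regular]
    exact hzero
  obtain ⟨p, hp, hle⟩ := (Ideal.subset_union_prime_finite (associatedPrimes.finite R M) ⊥ ⊥
    fun p hp _ _ => hp.isPrime).mp hcover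
  exact hM <| (maximalIdeal.isMaximal R).eq_of_le hp.isPrime.ne_top hle ▸ hp

/-- `M` has a regular sequence of `n` elements of the maximal ideal. For `n = 0` this says that `M`
is nontrivial. -/
def DepthAtLeast (R : Type*) [CommRing R] [IsLocalRing R] (M : Type*) [AddCommGroup M]
    [Module R M] (n : ℕ) : Prop :=
  ∃ rs : List R, rs.length = n ∧ (∀ r ∈ rs, r ∈ maximalIdeal R) ∧ IsRegular M rs

-- The supremum defining `depthM` takes the junk value `0` on an unbounded set.
theorem depthAtLeast_depthM (h : depthM R M ≠ 0) : DepthAtLeast R M (depthM R M) := by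
  refine Nat.sSup_mem (Set.nonempty_iff_ne_empty.mpr fun hempty => h ?_)
    (not_not.mp fun hbdd => h (Nat.sSup_of_not_bddAbove hbdd))
  rw [depthM, hempty, csSup_empty, Nat.bot_eq_zero]

theorem DepthAtLeast.nontrivial {n : ℕ} (h : DepthAtLeast R M n) : Nontrivial M :=
  let ⟨_, _, _, hreg⟩ := h
  hreg.nontrivial

theorem depthAtLeast_succ_iff {n : ℕ} :
    DepthAtLeast R M (n + 1) ↔
      ∃ y ∈ maximalIdeal R, IsSMulRegular M y ∧ DepthAtLeast R (QuotSMulTop y M) n := by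
  constructor
  · rintro ⟨_ | ⟨y, rs⟩, hlen, hmem, hreg⟩
    · contradiction
    · rw [isRegular_cons_iff] at hreg
      rw [List.forall_mem_cons] at hmem
      exact ⟨y, hmem.1, hreg.1, rs, Nat.succ_injective hlen, hmem.2, hreg.2⟩
  · rintro ⟨y, hy, hyreg, rs, hlen, hmem, hreg⟩
    exact ⟨y :: rs, congrArg Nat.succ hlen, List.forall_mem_cons.mpr ⟨hy, hmem⟩, hreg.cons hyreg⟩

section Exchange

variable [IsNoetherianRing R] [Module.Finite R M] {x y : R}

theorem isSMulRegular_quotSMulTop_swap (hx : x ∈ maximalIdeal R) (hy : y ∈ maximalIdeal R)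
    (hxreg : IsSMulRegular M x) (hyreg : IsSMulRegular (QuotSMulTop x M) y) :
    IsSMulRegular M y ∧ IsSMulRegular (QuotSMulTop y M) x := by
  have hperm : IsWeaklyRegular M [y, x] := isWeaklyRegular_of_perm_of_subset_maximalIdeal
    (.cons hxreg ((isWeaklyRegular_singleton_iff _ _).mpr hyreg)) (.swap y x [])
    (List.forall_mem_cons.mpr ⟨hx, List.forall_mem_singleton.mpr hy⟩)
  rwa [isWeaklyRegular_cons_iff, isWeaklyRegular_singleton_iff] at hperm

theorem DepthAtLeast.quotSMulTop_swap {n : ℕ} (hxreg : IsSMulRegular M x)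
    (hyreg : IsSMulRegular (QuotSMulTop x M) y)
    (h : DepthAtLeast R (QuotSMulTop y (QuotSMulTop x M)) n) :
    DepthAtLeast R (QuotSMulTop x (QuotSMulTop y M)) n := by
  obtain ⟨rs, hlen, hmem, hreg⟩ := h
  have hperm : IsRegular M (y :: x :: rs) :=
    isRegular_of_perm ((hreg.cons hyreg).cons hxreg) (.swap y x rs)
  rw [isRegular_cons_iff, isRegular_cons_iff] at hperm
  exact ⟨rs, hlen, hmem, hperm.2.2⟩

theorem DepthAtLeast.exists_isSMulRegular_quotSMulTop_and {n : ℕ} (hy : y ∈ maximalIdeal R)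
    (hxreg : IsSMulRegular M x) (hyreg : IsSMulRegular M y)
    (h : DepthAtLeast R (QuotSMulTop y M) (n + 1)) :
    ∃ z ∈ maximalIdeal R, IsSMulRegular (QuotSMulTop x M) z ∧
      IsSMulRegular (QuotSMulTop y M) z := by
  obtain ⟨w, hw, hwreg, -⟩ := depthAtLeast_succ_iff.mp h
  have hMy : maximalIdeal R ∉ associatedPrimes R (QuotSMulTop y M) :=
    notMem_associatedPrimes_of_isSMulRegular hw hwreg
  have hMx : maximalIdeal R ∉ associatedPrimes R (QuotSMulTop x M) := fun hm =>
    hMy (isAssociatedPrime_quotSMulTop_exchange hxreg hyreg hy hm)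
  simp_rw [← Prod.isSMulRegular_iff]
  refine exists_mem_maximalIdeal_isSMulRegular ?_
  rw [associatedPrimes.prod]
  exact fun hm => hm.elim hMx hMy

-- An element `z` regular on both `M / xM` and `M / yM` links the two quotients: `y` may be
-- exchanged for `z`, and then `z` for `x`.
theorem DepthAtLeast.quotSMulTop {n : ℕ} (h : DepthAtLeast R M (n + 1)) (hx : x ∈ maximalIdeal R)
    (hxreg : IsSMulRegular M x) : DepthAtLeast R (QuotSMulTop x M) n := by
  induction n generalizing M x with
  | zero =>
    have : Nontrivial M := h.nontrivial
    have hxM : IsRegular M [x] := .of_isWeaklyRegular_of_mem_maximalIdeal M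
      (List.forall_mem_singleton.mpr hx)
      ((isWeaklyRegular_singleton_iff M x).mpr hxreg)
    exact ⟨[], rfl, by simp, ((isRegular_cons_iff M x []).mp hxM).2⟩
  | succ n ih =>
    obtain ⟨y, hy, hyreg, hMy⟩ := depthAtLeast_succ_iff.mp h
    obtain ⟨z, hz, hzx, hzy⟩ := hMy.exists_isSMulRegular_quotSMulTop_and hy hxreg hyreg
    obtain ⟨hzreg, hyz⟩ := isSMulRegular_quotSMulTop_swap hy hz hyreg hzy
    obtain ⟨-, hxz⟩ := isSMulRegular_quotSMulTop_swap hx hz hxreg hzx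
    have hMz : DepthAtLeast R (QuotSMulTop z M) (n + 1) :=
      depthAtLeast_succ_iff.mpr ⟨y, hy, hyz, (ih hMy hz hzy).quotSMulTop_swap hyreg hzy⟩
    exact depthAtLeast_succ_iff.mpr ⟨z, hz, hzx, (ih hMz hx hxz).quotSMulTop_swap hzreg hxz⟩

end Exchange

end Depth

section Reduction

open scoped Pointwise

variable {R : Type*} [CommRing R] {M : Type*} [AddCommGroup M] [Module R M]

theorem sup_smul_top_eq_of_quotSMulTop {I J : Ideal R} {x : R} (hx : x ∈ I)
    (h : (J • ⊤ : Submodule R (QuotSMulTop x M)) = I • ⊤) :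
    (Ideal.span {x} ⊔ J) • (⊤ : Submodule R M) = I • ⊤ := by
  rw [smul_top_quotient, smul_top_quotient] at h
  rw [Submodule.sup_smul, Submodule.ideal_span_singleton_smul, ← Submodule.comap_map_mkQ, h,
    Submodule.comap_map_mkQ, sup_eq_right.mpr (pointwise_smul_top_le_smul_top hx)]

variable [IsLocalRing R] [IsNoetherianRing R] [Module.Finite R M]

theorem maximalIdeal_smul_top_eq_bot_of_eventuallyPolynomial_C {e : ℕ}
    (hlen : Module.length R (M ⧸ (maximalIdeal R • ⊤ : Submodule R M)) = e)
    (h : EventuallyPolynomial (hilbertSamuelFunction (maximalIdeal R) M) (C (e : ℚ))) :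
    (maximalIdeal R • ⊤ : Submodule R M) = ⊥ := by
  obtain ⟨n, ⟨l, hl, hle⟩, hn⟩ := (h.and (eventually_ge_atTop 1)).exists
  obtain rfl : l = e := by simpa using hle
  rw [hilbertSamuelFunction, moduleLength_eq_length] at hl
  have heq : (maximalIdeal R ^ (n + 1) • ⊤ : Submodule R M) = maximalIdeal R • ⊤ := by
    refine eq_of_le_of_length_quotient_eq (Submodule.smul_mono_left (Ideal.pow_le_self (by lia)))
      ?_ (hl.trans hlen.symm)
    exact ne_of_eq_of_ne hl (ENat.natCast_ne_top l)
  refine Submodule.eq_bot_of_le_smul_of_le_jacobson_bot (maximalIdeal R) _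
    (IsNoetherian.noetherian _) ?_ (maximalIdeal_le_jacobson ⊥)
  rw [smul_smul, ← pow_two]
  exact heq.ge.trans (pow_smul_top_anti (by lia))

variable [Infinite (ResidueField R)]

theorem DepthAtLeast.exists_isSuperficial_isSMulRegular {n : ℕ} (h : DepthAtLeast R M (n + 1)) :
    ∃ x, IsSuperficial (maximalIdeal R) M x ∧ IsSMulRegular M x := by
  obtain ⟨y, hy, hyreg, -⟩ := depthAtLeast_succ_iff.mp h
  obtain ⟨x, hx⟩ := exists_isSuperficial (maximalIdeal R) M
  exact ⟨x, hx, hx.isSMulRegular Ideal.IsPrime.ne_top' hy hyreg⟩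

-- Keeping the generators outside the annihilator makes them distinct: `x` kills `M / xM`.
theorem exists_finset_span_smul_top_eq {t e : ℕ} {P : ℚ[X]} (hdepth : DepthAtLeast R M t)
    (hP : EventuallyPolynomial (hilbertSamuelFunction (maximalIdeal R) M) P)
    (hdeg : P.natDegree ≤ t)
    (hlen : Module.length R (M ⧸ (maximalIdeal R • ⊤ : Submodule R M)) = e)
    (hmult : (t.factorial : ℚ) * P.coeff t = e) :
    ∃ s : Finset R, s.card = t ∧ (∀ y ∈ s, y ∈ maximalIdeal R ∧ y ∉ Module.annihilator R M) ∧
      Ideal.span (s : Set R) • (⊤ : Submodule R M) = maximalIdeal R • ⊤ := by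
  classical
  induction t generalizing M P with
  | zero =>
    have hPe : P = C (e : ℚ) := by
      rw [eq_C_of_natDegree_le_zero hdeg, ← hmult, Nat.factorial_zero, Nat.cast_one, one_mul]
    refine ⟨∅, rfl, by simp, ?_⟩
    rw [maximalIdeal_smul_top_eq_bot_of_eventuallyPolynomial_C hlen (hPe ▸ hP)]
    simp
  | succ t ih =>
    obtain ⟨x, hx, hxreg⟩ := hdepth.exists_isSuperficial_isSMulRegular
    obtain ⟨s, hcard, hs, hspan⟩ := ih (hdepth.quotSMulTop hx.mem hxreg)
      (hP.backwardDiff_of_succ_eq_add (hx.hilbertSamuelFunction_succ hxreg))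
      (natDegree_backwardDiff_le hdeg)
      ((length_quotSMulTop_quotient_smul_top hx.mem).trans hlen)
      ((factorial_mul_coeff_backwardDiff hdeg).trans hmult)
    have hxs : x ∉ s := fun hmem => (hs x hmem).2 (QuotSMulTop.mem_annihilator M x)
    have hxann : x ∉ Module.annihilator R M := fun hann => by
      have := hdepth.nontrivial
      obtain ⟨u, hu⟩ := exists_ne (0 : M)
      exact hu (hxreg.right_eq_zero_of_smul (Module.mem_annihilator.mp hann u))
    refine ⟨insert x s, by rw [Finset.card_insert_of_notMem hxs, hcard], ?_, ?_⟩
    · refine Finset.forall_mem_insert _ _ _ |>.mpr ⟨⟨hx.mem, hxann⟩, fun y hy => ⟨(hs y hy).1, ?_⟩⟩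
      exact fun hann => (hs y hy).2 (LinearMap.annihilator_le_of_surjective
        (Submodule.mkQ _) (Submodule.mkQ_surjective _) hann)
    · rw [Finset.coe_insert, Ideal.span_insert]
      exact sup_smul_top_eq_of_quotSMulTop hx.mem hspan

end Reduction

section Ulrich

variable {R : Type*} [CommRing R] [IsNoetherianRing R] [IsLocalRing R] [Infinite (ResidueField R)]
  {M : Type*} [AddCommGroup M] [Module R M] [Module.Finite R M]

theorem exists_isParameterIdeal_smul_top_eq {t : ℕ} {P : ℚ[X]} (hdepth : DepthAtLeast R M t)
    (hP : EventuallyPolynomial (hilbertSamuelFunction (maximalIdeal R) M) P)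
    (hdeg : P.natDegree ≤ t) (hUlrich : (muGen R M : ℚ) = (t.factorial : ℚ) * P.coeff t) :
    ∃ Q : Ideal R, IsParameterIdeal R M t Q ∧
      maximalIdeal R • (⊤ : Submodule R M) = Q • ⊤ := by
  obtain ⟨s, hcard, hs, hspan⟩ := exists_finset_span_smul_top_eq hdepth hP hdeg
    length_quotient_maximalIdeal_smul_top hUlrich.symm
  refine ⟨Ideal.span s, ⟨Ideal.span_le.mpr fun y hy => (hs y hy).1, s, hcard, rfl, ?_⟩, hspan.symm⟩
  rw [hspan, moduleLength_eq_length, length_quotient_maximalIdeal_smul_top]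
  exact ENat.natCast_ne_top _

theorem DepthAtLeast.eventuallyPolynomial_colonLengthFunction {n : ℕ} {P : ℚ[X]} {Q : Ideal R}
    (hdepth : DepthAtLeast R M (n + 1))
    (hP : EventuallyPolynomial (hilbertSamuelFunction (maximalIdeal R) M) P)
    (hQ : maximalIdeal R • (⊤ : Submodule R M) = Q • ⊤) :
    EventuallyPolynomial (colonLengthFunction Q (maximalIdeal R) M) (backwardDiff P) := by
  obtain ⟨x, hx, hxreg⟩ := hdepth.exists_isSuperficial_isSMulRegular
  rw [← colonLengthFunction_congr hQ]
  exact hP.backwardDiff_of_succ_eq_add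
    (hx.hilbertSamuelFunction_succ_eq_add_colonLengthFunction hxreg)

end Ulrich

theorem statement8_general {R M : Type*} [CommRing R] [IsNoetherianRing R] [IsLocalRing R]
    [AddCommGroup M] [Module R M] [Module.Finite R M] [Infinite (ResidueField R)]
    {t : ℕ} (ht : 0 < t) (hCM : depthM R M = t) {P : ℚ[X]} (hPdeg : P.natDegree = t)
    (hP : EventuallyPolynomial (hilbertSamuelFunction (maximalIdeal R) M) P)
    (hUlrich : (muGen R M : ℚ) = (t.factorial : ℚ) * P.leadingCoeff) :
    (∃ Q : Ideal R, IsParameterIdeal R M t Q ∧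
      (maximalIdeal R) • (⊤ : Submodule R M) = Q • ⊤) ∧
    ∀ Q : Ideal R, (maximalIdeal R) • (⊤ : Submodule R M) = Q • ⊤ → ∃ G : ℚ[X],
      EventuallyPolynomial (colonLengthFunction Q (maximalIdeal R) M) G ∧
        G.natDegree = t - 1 ∧ ∀ l : ℕ, moduleLength R (M ⧸ (Q • ⊤ : Submodule R M)) = l →
          ((t - 1).factorial : ℚ) * G.leadingCoeff = (l : ℚ) := by
  obtain ⟨k, rfl⟩ := Nat.exists_eq_add_of_le' ht
  have hdepth : DepthAtLeast R M (k + 1) := hCM ▸ depthAtLeast_depthM (by lia)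
  rw [leadingCoeff, hPdeg] at hUlrich
  refine ⟨exists_isParameterIdeal_smul_top_eq hdepth hP hPdeg.le hUlrich, fun Q hQ => ?_⟩
  have hGdeg : (backwardDiff P).natDegree = k := natDegree_backwardDiff hPdeg
  refine ⟨backwardDiff P, hdepth.eventuallyPolynomial_colonLengthFunction hP hQ, hGdeg,
    fun l hl => ?_⟩
  have hmu : muGen R M = l := by
    rw [← hQ, moduleLength_eq_length, length_quotient_maximalIdeal_smul_top] at hl
    exact_mod_cast hl
  rw [Nat.add_sub_cancel, leadingCoeff, hGdeg, factorial_mul_coeff_backwardDiff hPdeg.le, ← hUlrich,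
    hmu]

/-- If `M` is Ulrich of dimension `t ≥ 2` over a local ring with infinite residue field,
then there is a parameter ideal `Q` with `𝔪M = QM`, and for it `f⁰_Q(M) = ℓ(M/QM)`. -/
theorem statement8 {R M : Type*} [CommRing R] [IsNoetherianRing R] [IsLocalRing R]
    [AddCommGroup M] [Module R M] [Module.Finite R M]
    [Infinite (ResidueField R)]
    (t : ℕ) (ht : 2 ≤ t)
    (hdim : ringKrullDim (R ⧸ Module.annihilator R M) = t)
    (hCM : depthM R M = t)
    (P : Polynomial ℚ) (hPdeg : P.natDegree = t)
    (hP : ∃ N : ℕ, ∀ n ≥ N, ∃ len : ℕ,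
      moduleLength R (M ⧸ ((maximalIdeal R) ^ (n + 1) • ⊤ : Submodule R M)) = len ∧
        (len : ℚ) = P.eval (n : ℚ))
    (hUlrich : (muGen R M : ℚ) = (t.factorial : ℚ) * P.leadingCoeff) :
    ∃ Q : Ideal R, IsParameterIdeal R M t Q ∧
      (maximalIdeal R) • (⊤ : Submodule R M) = Q • ⊤ ∧
      ∀ G : Polynomial ℚ, G.natDegree = t - 1 →
        (∃ N : ℕ, ∀ n ≥ N, ∃ len : ℕ,
          moduleLength R ↥(Submodule.map (Q ^ (n + 1) • ⊤ : Submodule R M).mkQ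
            ((Q ^ (n + 1) • ⊤ : Submodule R M).colonBy (maximalIdeal R))) = len ∧
            (len : ℚ) = G.eval (n : ℚ)) →
        ∀ l : ℕ, moduleLength R (M ⧸ (Q • ⊤ : Submodule R M)) = l →
          ((t - 1).factorial : ℚ) * G.leadingCoeff = (l : ℚ) := by
  obtain ⟨⟨Q, hparam, hQ⟩, hmult⟩ :=
    statement8_general (by lia) hCM hPdeg (eventually_atTop.mpr hP) hUlrich
  obtain ⟨G, hG, -, hlead⟩ := hmult Q hQ
  exact ⟨Q, hparam, hQ, fun G' _ hG' => hG.unique (eventually_atTop.mpr hG') ▸ hlead⟩
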